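/- Let q = p^h with p an odd prime and let f(X,Y) = Σ_{i,j} a_{i,j} X^i Y^j ∈ F_q[X,Y] have total degree d ≥ 1, a_{0,0} = 0, and a_{0,1} = 0. If d is not a power of p, or there exists a pair (i,j) ≠ (d,0) with a_{i,j} ≠ 0, then the hypersurface S_f contains an absolutely irreducible component defined over F_q; that is, there is a nonconstant polynomial g ∈ F_q[X_0,X_1,X_2,X_3,X_4] dividing F that remains irreducible over the algebraic closure of F_q. -/

import Mathlib

open MvPolynomial

/-- The coefficient `a_{i,j}` of the monomial `X^i Y^j` in `f ∈ F_q[X,Y]`. -/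
noncomputable def coeffXY {K : Type*} [Field K] (f : MvPolynomial (Fin 2) K) (i j : ℕ) : K :=
  f.coeff (Finsupp.single (0 : Fin 2) i + Finsupp.single (1 : Fin 2) j)

/-- The homogeneous polynomial
`F = (X₂ − X₄)² X₀^{d−1} + (X₁ − X₃)·Σ_{i,j} a_{i,j}(X₁^i X₂^j − X₃^i X₄^j) X₀^{d−i−j}`
defining the hypersurface `S_f ⊂ PG(4,q)`. -/
noncomputable def Fpoly {K : Type*} [Field K] (f : MvPolynomial (Fin 2) K) (d : ℕ) :
    MvPolynomial (Fin 5) K :=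
  (X 2 - X 4) ^ 2 * (X 0) ^ (d - 1)
    + (X 1 - X 3) *
      ∑ m ∈ f.support,
        C (f.coeff m) *
          ((X 1) ^ (m 0) * (X 2) ^ (m 1) - (X 3) ^ (m 0) * (X 4) ^ (m 1))
          * (X 0) ^ (d - m 0 - m 1)

/-- `S_f` contains an absolutely irreducible component defined over the base field: there is a
nonconstant polynomial `g` over the base field dividing `F` that remains irreducible over the
algebraic closure. -/
def HasAbsIrrComponent {K : Type*} [Field K] (F : MvPolynomial (Fin 5) K) : Prop :=
  ∃ g : MvPolynomial (Fin 5) K, g ∣ F ∧ 0 < g.totalDegree ∧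
    Irreducible (MvPolynomial.map (algebraMap K (AlgebraicClosure K)) g)

/-!
Let `L` be an algebraic closure of `K` and let `G` be an irreducible factor of `F` over `L`. If some
conjugate of `G` is not a scalar multiple of `G`, then `F` is divisible by the product of `G` and
this conjugate. Otherwise `G` can be normalised to be fixed by the Galois group, a power of it is
defined over `K`, and some irreducible factor of `F` over `K` is a scalar multiple of `G ^ k`; here
`k ≥ 2` if `S_f` has no absolutely irreducible component over `K`. So without such a component every
irreducible factor of `F` comes together with a conjugate of the same degree, and a
conjugation-invariant degree of a specialization of `F` can never be equal to `1`.

Apply this to `(X₂ - X₄)² + (X₁ - X₃) (f(X₁, X₂) - f(X₃, X₄))`, that is, to `F` at `X₀ = 1`.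
* If `f` had degree at least two in `Y`, then for the weights `2` of `X` and `d + 1` of `Y` the
  leading form of a specialization would be linear in `X₁ - X₃`.
* At `X₂ = X₄` the polynomial has degree at most one in `X₂`, so the coefficient of `Y` in `f` is
  the constant `a_{0,1} = 0`, and `f` is a polynomial in `X` alone.
* At `X₄ = 0` the polynomial is `X₂² + (X₁ - X₃) (f(X₁) - f(X₃))`, which now has a factor linear in
  `X₂`, so `(X₁ - X₃) (f(X₁) - f(X₃))` is a square over `L`. If `f' ≠ 0`, differentiation gives
  `deg f = 1`; otherwise `f` is a `p`-th power over `L` and its `p`-th root has the same property.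
  Hence `f = a X ^ (p ^ l)`.
-/

section ConjugatePairing

variable {K L ι : Type*} [Field K] [Field L] [Algebra K L]

theorem mem_perfectClosure_of_forall_apply_eq [Normal K L] {x : L} (hx : ∀ σ : Gal(L/K), σ x = x) :
    x ∈ perfectClosure K L := by
  classical
  have hint : IsIntegral K x := Algebra.IsIntegral.isIntegral x
  have hroots : ((minpoly K x).aroots L).toFinset = {x} := by
    ext y
    rw [Multiset.mem_toFinset, Polynomial.mem_aroots, Finset.mem_singleton]
    constructor
    · rintro ⟨-, hy⟩
      obtain ⟨σ, rfl⟩ := minpoly.exists_algEquiv_of_root' hint.isAlgebraic hy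
      exact hx σ
    · rintro rfl
      exact ⟨minpoly.ne_zero hint, minpoly.aeval K y⟩
  rw [mem_perfectClosure_iff_natSepDegree_eq_one,
    Polynomial.natSepDegree_eq_of_splits _ (Normal.splits inferInstance x), hroots,
    Finset.card_singleton]

theorem exists_map_eq_pow_expChar_pow_of_coeff_mem_perfectClosure (p : ℕ) [ExpChar K p]
    {G : MvPolynomial ι L} (hG : ∀ m, coeff m G ∈ perfectClosure K L) :
    ∃ (n : ℕ) (g : MvPolynomial ι K), map (algebraMap K L) g = G ^ p ^ n := by
  have : ExpChar L p := expChar_of_injective_algebraMap (algebraMap K L).injective p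
  choose n hn using fun m => (mem_perfectClosure_iff_pow_mem p).mp (hG m)
  refine ⟨G.support.sup n, ?_⟩
  rw [← RingHom.mem_range, G.as_sum, sum_pow_char_pow p, ← G.as_sum]
  refine sum_mem fun m hm => ?_
  obtain ⟨c, hc⟩ := hn m
  obtain ⟨k, hk⟩ := Nat.exists_eq_add_of_le (Finset.le_sup (f := n) hm)
  refine ⟨monomial (p ^ G.support.sup n • m) (c ^ p ^ k), ?_⟩
  rw [map_monomial, monomial_pow, map_pow, hc, ← pow_mul, ← pow_add, ← hk]

theorem exists_associated_forall_map_eq {G : MvPolynomial ι L} (hG0 : G ≠ 0)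
    (hG : ∀ σ : Gal(L/K), Associated G (map (σ : L →+* L) G)) :
    ∃ G', Associated G G' ∧ ∀ σ : Gal(L/K), map (σ : L →+* L) G' = G' := by
  obtain ⟨m, hm⟩ := ne_zero_iff.mp hG0
  have hunit : IsUnit (C (σ := ι) (coeff m G)⁻¹) :=
    (isUnit_iff_ne_zero.mpr (inv_ne_zero hm)).map C
  have hGG' : Associated G (C (coeff m G)⁻¹ * G) := (associated_unit_mul_left G _ hunit).symm
  refine ⟨C (coeff m G)⁻¹ * G, hGG', fun σ => ?_⟩
  obtain ⟨u, hu⟩ := hGG'.symm.trans ((hG σ).trans (hGG'.map (map (σ : L →+* L))))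
  obtain ⟨c, -, huc⟩ := isUnit_iff_eq_C_of_isReduced.mp u.isUnit
  have hc : c = 1 := by
    have hcoeff := congrArg (coeff m) hu
    simpa [huc, mul_comm _ (C c), coeff_map, hm] using hcoeff
  rw [← hu, huc, hc, C_1, mul_one]

/-- `F` is conjugate-paired over `K` if no irreducible factor of `F` over `L` stands alone: together
with each such factor, `F` is divisible by the product of that factor with one of its conjugates.
The conjugate may be the factor itself, in which case it is a multiple factor. -/
def IsConjugatePaired (K : Type*) {L ι : Type*} [Field K] [Field L] [Algebra K L]
    (F : MvPolynomial ι L) : Prop :=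
  ∀ G, Irreducible G → G ∣ F → ∃ σ : Gal(L/K), G * map (σ : L →+* L) G ∣ F

theorem map_algEquiv_map_algebraMap (σ : Gal(L/K)) (F : MvPolynomial ι K) :
    map (σ : L →+* L) (map (algebraMap K L) F) = map (algebraMap K L) F := by
  rw [map_map, show (σ : L →+* L).comp (algebraMap K L) = algebraMap K L from
    RingHom.ext σ.commutes]

theorem exists_map_eq_pow_expChar_pow_of_forall_map_eq [Normal K L] (p : ℕ) [ExpChar K p]
    {G : MvPolynomial ι L} (hG : ∀ σ : Gal(L/K), map (σ : L →+* L) G = G) :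
    ∃ (n : ℕ) (g : MvPolynomial ι K), map (algebraMap K L) g = G ^ p ^ n := by
  refine exists_map_eq_pow_expChar_pow_of_coeff_mem_perfectClosure p fun m =>
    mem_perfectClosure_of_forall_apply_eq fun σ => ?_
  conv_rhs => rw [← hG σ, coeff_map, RingHom.coe_coe]

theorem exists_irreducible_dvd_map_dvd_pow [Normal K L] {F : MvPolynomial ι K}
    {G : MvPolynomial ι L} (hG : Irreducible G) (hGF : G ∣ map (algebraMap K L) F)
    (hfix : ∀ σ : Gal(L/K), map (σ : L →+* L) G = G) :
    ∃ (g : MvPolynomial ι K) (n : ℕ), Irreducible g ∧ g ∣ F ∧ map (algebraMap K L) g ∣ G ^ n := by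
  obtain ⟨p, _⟩ := ExpChar.exists K
  have hp : ∀ n, p ^ n ≠ 0 := fun n => (expChar_pow_pos K p n).ne'
  obtain ⟨H, hH⟩ := hGF
  have hHfix (σ : Gal(L/K)) : map (σ : L →+* L) H = H := by
    refine mul_left_cancel₀ hG.ne_zero ?_
    conv_lhs => rw [← hfix σ, ← map_mul, ← hH, map_algEquiv_map_algebraMap, hH]
  obtain ⟨n, g₀, hg₀⟩ := exists_map_eq_pow_expChar_pow_of_forall_map_eq p hfix
  obtain ⟨m, h₀, hh₀⟩ := exists_map_eq_pow_expChar_pow_of_forall_map_eq p hHfix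
  have hg₀F : g₀ ∣ F ^ p ^ (n + m) := by
    have hpow : F ^ p ^ (n + m) = g₀ ^ p ^ m * h₀ ^ p ^ n := by
      apply map_injective _ (algebraMap K L).injective
      rw [map_pow, map_mul, map_pow, map_pow, hH, hg₀, hh₀]
      ring
    exact hpow ▸ (dvd_pow_self g₀ (hp m)).mul_right _
  have hg₀unit : ¬ IsUnit g₀ := fun h =>
    hG.not_isUnit ((isUnit_pow_iff (hp n)).mp (hg₀ ▸ h.map (map (algebraMap K L))))
  have hg₀0 : g₀ ≠ 0 := by
    rintro rfl
    exact pow_ne_zero _ hG.ne_zero (by rw [← hg₀, map_zero])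
  obtain ⟨g, hg, hgg₀⟩ := WfDvdMonoid.exists_irreducible_factor hg₀unit hg₀0
  exact ⟨g, p ^ n, hg, hg.prime.dvd_of_dvd_pow (hgg₀.trans hg₀F), hg₀ ▸ map_dvd _ hgg₀⟩

theorem isUnit_map_algebraMap_iff {g : MvPolynomial ι K} :
    IsUnit (map (algebraMap K L) g) ↔ IsUnit g := by
  simp only [MvPolynomial.isUnit_iff, coeff_map, isUnit_iff_ne_zero, isNilpotent_iff_eq_zero,
    map_ne_zero, map_eq_zero]

theorem isConjugatePaired_map [Normal K L] {F : MvPolynomial ι K}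
    (hF : ∀ g, g ∣ F → ¬ Irreducible (map (algebraMap K L) g)) :
    IsConjugatePaired K (map (algebraMap K L) F) := by
  intro G hG hGF
  by_cases hassoc : ∀ σ : Gal(L/K), Associated G (map (σ : L →+* L) G)
  · obtain ⟨G', hGG', hfix⟩ := exists_associated_forall_map_eq hG.ne_zero hassoc
    obtain ⟨g, n, hg, hgF, hgG'⟩ := exists_irreducible_dvd_map_dvd_pow (hGG'.irreducible hG)
      (hGG'.dvd_iff_dvd_left.mp hGF) hfix
    obtain ⟨k, -, hk⟩ := (dvd_prime_pow hG.prime n).mp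
      (hgG'.trans (pow_dvd_pow_of_dvd hGG'.symm.dvd n))
    have hk2 : 2 ≤ k := by
      by_contra! hlt
      interval_cases k
      · rw [pow_zero, associated_one_iff_isUnit] at hk
        exact hg.not_isUnit (isUnit_map_algebraMap_iff.mp hk)
      · rw [pow_one] at hk
        exact hF g hgF (hk.symm.irreducible hG)
    refine ⟨1, ?_⟩
    calc G * map ((1 : Gal(L/K)) : L →+* L) G = G ^ 2 := by
          rw [show ((1 : Gal(L/K)) : L →+* L) = RingHom.id L from rfl, map_id, pow_two]
      _ ∣ G ^ k := pow_dvd_pow G hk2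
      _ ∣ map (algebraMap K L) g := hk.symm.dvd
      _ ∣ map (algebraMap K L) F := map_dvd _ hgF
  · push Not at hassoc
    obtain ⟨σ, hσ⟩ := hassoc
    have hσG : Irreducible (map (σ : L →+* L) G) :=
      (MulEquiv.irreducible_iff (mapEquiv ι σ.toRingEquiv)).mpr hG
    have hσGF : map (σ : L →+* L) G ∣ map (algebraMap K L) F :=
      map_algEquiv_map_algebraMap σ F ▸ map_dvd (map (σ : L →+* L)) hGF
    exact ⟨σ, (hG.isRelPrime_iff_not_dvd.mpr fun h => hσ (hG.associated_of_dvd hσG h)).mul_dvd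
      hGF hσGF⟩

end ConjugatePairing

section DegreeHalving

open scoped Polynomial

theorem exists_irreducible_dvd_of_pos {R A E : Type*} [CommMonoidWithZero R] [WfDvdMonoid R]
    [MonoidWithZero A] [FunLike E R A] [MonoidWithZeroHomClass E R A] (e : E) {ν : A → ℕ}
    (hν : ∀ a b, a ≠ 0 → b ≠ 0 → ν (a * b) = ν a + ν b) {F : R} (hF0 : e F ≠ 0)
    (hF : 0 < ν (e F)) : ∃ G, Irreducible G ∧ G ∣ F ∧ 0 < ν (e G) := by
  induction F using WfDvdMonoid.induction_on_irreducible with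
  | zero => exact (hF0 (map_zero e)).elim
  | unit u hu =>
    obtain ⟨v, huv⟩ := hu.exists_right_inv
    have huv' : e u * e v = 1 := by rw [← map_mul, huv, map_one]
    have : Nontrivial A := nontrivial_of_ne _ _ hF0
    have hone := hν 1 1 one_ne_zero one_ne_zero
    have hadd := hν _ _ hF0 (right_ne_zero_of_mul_eq_one huv')
    rw [mul_one] at hone
    rw [huv'] at hadd
    omega
  | mul a i _ hi ih =>
    rw [map_mul] at hF0 hF
    have hi0 := left_ne_zero_of_mul hF0
    have ha0 := right_ne_zero_of_mul hF0
    rw [hν _ _ hi0 ha0] at hF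
    by_cases hpos : 0 < ν (e i)
    · exact ⟨i, hi, dvd_mul_right _ _, hpos⟩
    · obtain ⟨G, hG, hGa, hGpos⟩ := ih ha0 (by omega)
      exact ⟨G, hG, hGa.mul_left _, hGpos⟩

/-- The extension of scalars from `R` to `S` for polynomials in three nested variables. The points
at which `F` is evaluated have coordinates in such a ring. -/
noncomputable abbrev mapCoeffs₃ {R S : Type*} [Semiring R] [Semiring S] (φ : R →+* S) :
    R[X][X][X] →+* S[X][X][X] :=
  Polynomial.mapRingHom (Polynomial.mapRingHom (Polynomial.mapRingHom φ))

theorem mapCoeffs₃_injective {R S : Type*} [Semiring R] [Semiring S] {φ : R →+* S}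
    (hφ : Function.Injective φ) : Function.Injective (mapCoeffs₃ φ) :=
  Polynomial.map_injective _ (Polynomial.map_injective _ (Polynomial.map_injective _ hφ))

theorem natDegree_mapCoeffs₃ {R S : Type*} [Semiring R] [Semiring S] {φ : R →+* S}
    (hφ : Function.Injective φ) (P : R[X][X][X]) :
    (mapCoeffs₃ φ P).natDegree = P.natDegree :=
  Polynomial.natDegree_map_eq_of_injective
    (Polynomial.map_injective _ (Polynomial.map_injective _ hφ)) P

theorem natDegree_leadingCoeff_mapCoeffs₃ {R S : Type*} [Semiring R] [Semiring S] {φ : R →+* S}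
    (hφ : Function.Injective φ) (P : R[X][X][X]) :
    (mapCoeffs₃ φ P).leadingCoeff.natDegree = P.leadingCoeff.natDegree := by
  rw [Polynomial.coe_mapRingHom, Polynomial.leadingCoeff_map_of_injective
    (Polynomial.map_injective _ (Polynomial.map_injective _ hφ)), Polynomial.coe_mapRingHom,
    Polynomial.natDegree_map_eq_of_injective (Polynomial.map_injective _ hφ)]

variable {K L ι : Type*} [Field K] [Field L] [Algebra K L]

theorem aeval_map_algEquiv (v : ι → K[X][X][X]) (σ : Gal(L/K)) (G : MvPolynomial ι L) :
    aeval (fun i => mapCoeffs₃ (algebraMap K L) (v i)) (map (σ : L →+* L) G) =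
      mapCoeffs₃ (σ : L →+* L) (aeval (fun i => mapCoeffs₃ (algebraMap K L) (v i)) G) := by
  have hσ : (σ : L →+* L).comp (algebraMap K L) = algebraMap K L := RingHom.ext σ.commutes
  induction G using MvPolynomial.induction_on with
  | C a => simp
  | add P Q hP hQ => simp only [map_add, hP, hQ]
  | mul_X P i hP =>
    simp only [map_mul, hP, map_X, aeval_X]
    simp only [mapCoeffs₃, Polynomial.coe_mapRingHom, Polynomial.map_map,
      Polynomial.mapRingHom_comp, hσ]

theorem aeval_map_algebraMap_mapCoeffs₃ (v : ι → K[X][X][X]) (F : MvPolynomial ι K) :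
    aeval (fun i => mapCoeffs₃ (algebraMap K L) (v i)) (map (algebraMap K L) F) =
      mapCoeffs₃ (algebraMap K L) (aeval v F) := by
  induction F using MvPolynomial.induction_on with
  | C a => simp
  | add P Q hP hQ => simp only [map_add, hP, hQ]
  | mul_X P i hP => simp only [map_mul, hP, map_X, aeval_X]

theorem IsConjugatePaired.exists_dvd_two_mul_le {F : MvPolynomial ι K}
    (hF : IsConjugatePaired K (map (algebraMap K L) F)) (v : ι → K[X][X][X]) {ν : L[X][X][X] → ℕ}
    (hν : ∀ P Q, P ≠ 0 → Q ≠ 0 → ν (P * Q) = ν P + ν Q)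
    (hνσ : ∀ (σ : Gal(L/K)) P, ν (mapCoeffs₃ (σ : L →+* L) P) = ν P) (hF0 : aeval v F ≠ 0)
    (hpos : 0 < ν (mapCoeffs₃ (algebraMap K L) (aeval v F))) :
    ∃ P, P ∣ mapCoeffs₃ (algebraMap K L) (aeval v F) ∧ 0 < ν P ∧
      2 * ν P ≤ ν (mapCoeffs₃ (algebraMap K L) (aeval v F)) := by
  let e : MvPolynomial ι L →ₐ[L] L[X][X][X] := aeval fun i => mapCoeffs₃ (algebraMap K L) (v i)
  have he : e (map (algebraMap K L) F) = mapCoeffs₃ (algebraMap K L) (aeval v F) :=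
    aeval_map_algebraMap_mapCoeffs₃ v F
  have heF0 : e (map (algebraMap K L) F) ≠ 0 :=
    he ▸ (map_ne_zero_iff _ (mapCoeffs₃_injective (algebraMap K L).injective)).mpr hF0
  rw [← he] at hpos ⊢
  obtain ⟨G, hG, hGF, hGpos⟩ := exists_irreducible_dvd_of_pos e hν heF0 hpos
  refine ⟨e G, map_dvd e hGF, hGpos, ?_⟩
  obtain ⟨σ, H, hH⟩ := hF G hG hGF
  rw [hH, map_mul] at heF0 ⊢
  have hGG := left_ne_zero_of_mul heF0
  rw [hν _ _ hGG (right_ne_zero_of_mul heF0)]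
  rw [map_mul] at hGG ⊢
  have hσ : ν (e (map (σ : L →+* L) G)) = ν (e G) := by
    rw [aeval_map_algEquiv, hνσ]
  rw [hν _ _ (left_ne_zero_of_mul hGG) (right_ne_zero_of_mul hGG), hσ]
  omega

theorem IsConjugatePaired.exists_dvd_natDegree_eq_one {F : MvPolynomial ι K}
    (hF : IsConjugatePaired K (map (algebraMap K L) F)) {v : ι → K[X][X][X]}
    (hv : (aeval v F).natDegree = 2) :
    ∃ P : L[X][X][X], P ∣ mapCoeffs₃ (algebraMap K L) (aeval v F) ∧ P.natDegree = 1 := by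
  have hdeg := natDegree_mapCoeffs₃ (algebraMap K L).injective (aeval v F)
  obtain ⟨P, hPF, hPpos, hP⟩ := hF.exists_dvd_two_mul_le v
    (fun P Q hP hQ => Polynomial.natDegree_mul hP hQ)
    (fun σ P => natDegree_mapCoeffs₃ σ.injective P)
    (fun h => by simp [h] at hv) (by omega)
  exact ⟨P, hPF, by omega⟩

theorem IsConjugatePaired.natDegree_aeval_ne_one {F : MvPolynomial ι K}
    (hF : IsConjugatePaired K (map (algebraMap K L) F)) (v : ι → K[X][X][X]) :
    (aeval v F).natDegree ≠ 1 := by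
  intro hv
  have hdeg := natDegree_mapCoeffs₃ (algebraMap K L).injective (aeval v F)
  obtain ⟨P, -, hPpos, hP⟩ := hF.exists_dvd_two_mul_le v
    (fun P Q hP hQ => Polynomial.natDegree_mul hP hQ)
    (fun σ P => natDegree_mapCoeffs₃ σ.injective P)
    (fun h => by simp [h] at hv) (by omega)
  omega

theorem IsConjugatePaired.natDegree_leadingCoeff_aeval_ne_one {F : MvPolynomial ι K}
    (hF : IsConjugatePaired K (map (algebraMap K L) F)) (v : ι → K[X][X][X]) :
    (aeval v F).leadingCoeff.natDegree ≠ 1 := by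
  intro hv
  have hdeg := natDegree_leadingCoeff_mapCoeffs₃ (algebraMap K L).injective (aeval v F)
  obtain ⟨P, -, hPpos, hP⟩ := hF.exists_dvd_two_mul_le v (ν := fun P => P.leadingCoeff.natDegree)
    (fun P Q hP hQ => by
      rw [Polynomial.leadingCoeff_mul, Polynomial.natDegree_mul
        (Polynomial.leadingCoeff_ne_zero.mpr hP) (Polynomial.leadingCoeff_ne_zero.mpr hQ)])
    (fun σ P => natDegree_leadingCoeff_mapCoeffs₃ σ.injective P)
    (fun h => by simp [h] at hv) (by omega)
  omega

end DegreeHalving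

section SquareDifference

open scoped Polynomial

theorem isSquare_mul_of_isSquare_mul_pow {R : Type*} [CommRing R] [IsDomain R]
    [UniqueFactorizationMonoid R] {a b : R} {n : ℕ} (hn : Odd n) (h : IsSquare (a * b ^ n)) :
    IsSquare (a * b) := by
  rcases eq_or_ne b 0 with rfl | hb
  · rw [mul_zero]
    exact IsSquare.zero
  obtain ⟨r, rfl⟩ := hn
  obtain ⟨s, hs⟩ := h
  have hs' : s ^ 2 = a * b * (b ^ r) ^ 2 := by rw [pow_two, ← hs]; ring
  obtain ⟨t, rfl⟩ : b ^ r ∣ s :=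
    (UniqueFactorizationMonoid.pow_dvd_pow_iff_dvd two_ne_zero).mp (hs' ▸ dvd_mul_left _ _)
  exact ⟨t, mul_right_cancel₀ (pow_ne_zero 2 (pow_ne_zero r hb)) (by rw [← hs']; ring)⟩

/-- The bivariate polynomial `f(y) - f(x)`, where `x` is the inner and `y` the outer variable of
`R[X][X]`. -/
noncomputable def diffPoly {R : Type*} [CommRing R] (f : R[X]) : R[X][X] :=
  f.map Polynomial.C - Polynomial.C f

variable {R : Type*} [CommRing R]

theorem natDegree_diffPoly (f : R[X]) : (diffPoly f).natDegree = f.natDegree := by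
  rw [diffPoly, Polynomial.natDegree_sub_C,
    Polynomial.natDegree_map_eq_of_injective Polynomial.C_injective]

theorem derivative_diffPoly (f : R[X]) :
    Polynomial.derivative (diffPoly f) = (Polynomial.derivative f).map Polynomial.C := by
  rw [diffPoly, Polynomial.derivative_sub, Polynomial.derivative_C, Polynomial.derivative_map,
    sub_zero]

theorem swap_diffPoly (f : R[X]) : Polynomial.Bivariate.swap (diffPoly f) = -diffPoly f := by
  rw [diffPoly, map_sub, Polynomial.Bivariate.swap_map_C, Polynomial.Bivariate.swap_C, neg_sub]

theorem diffPoly_X : diffPoly (Polynomial.X : R[X]) = Polynomial.X - Polynomial.C Polynomial.X := by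
  rw [diffPoly, Polynomial.map_X]

theorem diffPoly_pow_expChar (p : ℕ) [ExpChar R p] (f : R[X]) :
    diffPoly (f ^ p) = diffPoly f ^ p := by
  rw [diffPoly, diffPoly, sub_pow_expChar, Polynomial.map_pow, Polynomial.C_pow]

theorem prime_diffPoly_X [IsDomain R] : Prime (diffPoly (Polynomial.X : R[X])) :=
  diffPoly_X (R := R) ▸ Polynomial.prime_X_sub_C _

theorem exists_diffPoly_eq_mul_sq_of_isSquare [IsDomain R] {f : R[X]}
    (hsq : IsSquare (diffPoly Polynomial.X * diffPoly f)) :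
    ∃ t, diffPoly f = diffPoly Polynomial.X * t ^ 2 := by
  obtain ⟨s, hs⟩ := hsq
  obtain ⟨t, rfl⟩ : diffPoly Polynomial.X ∣ s :=
    or_self_iff.mp (prime_diffPoly_X.dvd_or_dvd (hs ▸ dvd_mul_right _ _))
  exact ⟨t, mul_left_cancel₀ prime_diffPoly_X.ne_zero (by rw [hs]; ring)⟩

/-- Write `f(y) - f(x) = (y - x) t²`. Differentiating in `y` shows `t ∣ f'(y)`, so `t` does not
involve `x`; exchanging `x` and `y` then determines the degree of `f`. -/
theorem natDegree_eq_one_of_isSquare_diffPoly [IsDomain R] {f : R[X]}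
    (hf : Polynomial.derivative f ≠ 0) (hsq : IsSquare (diffPoly Polynomial.X * diffPoly f)) :
    f.natDegree = 1 := by
  obtain ⟨t, ht⟩ := exists_diffPoly_eq_mul_sq_of_isSquare hsq
  have hdvd : t ∣ (Polynomial.derivative f).map Polynomial.C := by
    rw [← derivative_diffPoly, ht, Polynomial.derivative_mul, Polynomial.derivative_pow]
    exact dvd_add ((dvd_pow_self t two_ne_zero).mul_left _)
      ((((dvd_pow_self t one_ne_zero).mul_left _).mul_right _).mul_left _)
  obtain ⟨t', rfl⟩ := Polynomial.Bivariate.swap.surjective t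
  have hdvd' : t' ∣ Polynomial.C (Polynomial.derivative f) := by
    have h := map_dvd Polynomial.Bivariate.swap hdvd
    rwa [Polynomial.Bivariate.swap_swap_apply, Polynomial.Bivariate.swap_map_C] at h
  have ht' : diffPoly f = diffPoly Polynomial.X * t' ^ 2 := by
    have h := congrArg Polynomial.Bivariate.swap ht
    rw [map_mul, map_pow, swap_diffPoly, swap_diffPoly, Polynomial.Bivariate.swap_swap_apply] at h
    linear_combination -h
  have hdeg : t'.natDegree = 0 := by
    simpa using Polynomial.natDegree_le_of_dvd hdvd' (Polynomial.C_ne_zero.mpr hf)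
  have ht'0 : t' ≠ 0 := by
    rintro rfl
    exact hf (Polynomial.C_eq_zero.mp (zero_dvd_iff.mp hdvd'))
  rw [← natDegree_diffPoly, ht', Polynomial.natDegree_mul prime_diffPoly_X.ne_zero
    (pow_ne_zero 2 ht'0), Polynomial.natDegree_pow, hdeg, natDegree_diffPoly,
    Polynomial.natDegree_X]

theorem exists_eq_pow_expChar_of_derivative_eq_zero {k : Type*} [Field k] (p : ℕ) [ExpChar k p]
    [PerfectRing k p] {f : k[X]} (hf : Polynomial.derivative f = 0) : ∃ g : k[X], f = g ^ p := by
  rw [← Polynomial.expand_contract' p hf]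
  exact ⟨_, polynomial_expand_eq k p _⟩

theorem exists_eq_C_mul_X_pow_add_C_of_isSquare_diffPoly {k : Type*} [Field k] (p : ℕ) [ExpChar k p]
    [PerfectRing k p] (hp : p ≠ 2) {f : k[X]}
    (hsq : IsSquare (diffPoly Polynomial.X * diffPoly f)) :
    ∃ (l : ℕ) (a b : k), f = Polynomial.C a * Polynomial.X ^ p ^ l + Polynomial.C b := by
  induction hn : f.natDegree using Nat.strong_induction_on generalizing f with
  | _ n ih =>
  rcases Nat.eq_zero_or_pos f.natDegree with hf | hf
  · exact ⟨0, 0, f.coeff 0, by simpa using Polynomial.eq_C_of_natDegree_eq_zero hf⟩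
  by_cases hder : Polynomial.derivative f = 0
  · obtain ⟨g, rfl⟩ := exists_eq_pow_expChar_of_derivative_eq_zero p hder
    have hprime : p.Prime := by
      refine (expChar_is_prime_or_one k p).resolve_right ?_
      rintro rfl
      have := charZero_of_expChar_one' k
      exact hf.ne' (Polynomial.derivative_eq_zero.mp hder)
    rw [Polynomial.natDegree_pow] at hf hn
    rw [diffPoly_pow_expChar] at hsq
    obtain ⟨l, a, b, rfl⟩ := ih g.natDegree
      (hn ▸ lt_mul_of_one_lt_left (Nat.pos_of_mul_pos_left hf) hprime.one_lt)
      (isSquare_mul_of_isSquare_mul_pow (hprime.odd_of_ne_two hp) hsq) rfl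
    exact ⟨l + 1, a ^ p, b ^ p, by
      rw [add_pow_expChar, mul_pow, ← pow_mul, pow_succ, Polynomial.C_pow, Polynomial.C_pow]⟩
  · obtain ⟨a, -, b, rfl⟩ :=
      Polynomial.natDegree_eq_one.mp (natDegree_eq_one_of_isSquare_diffPoly hder hsq)
    exact ⟨0, a, b, by simp⟩

end SquareDifference

section Specialization

open scoped Polynomial

theorem natDegree_aeval_le {ι R A : Type*} [Fintype ι] [CommSemiring R] [CommSemiring A]
    [Algebra R A] {v : ι → A[X]} {f : MvPolynomial ι R} {N : ℕ}
    (hf : ∀ m ∈ f.support, ∑ i, m i * (v i).natDegree ≤ N) : (aeval v f).natDegree ≤ N := by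
  rw [aeval_def, eval₂_eq']
  refine Polynomial.natDegree_sum_le_of_forall_le _ _ fun m hm => ?_
  rw [Polynomial.algebraMap_apply]
  calc _ ≤ (∏ i, v i ^ m i).natDegree := Polynomial.natDegree_C_mul_le _ _
    _ ≤ ∑ i, (v i ^ m i).natDegree := Polynomial.natDegree_prod_le _ _
    _ ≤ ∑ i, m i * (v i).natDegree := Finset.sum_le_sum fun i _ => Polynomial.natDegree_pow_le
    _ ≤ N := hf m hm

/-- The specialization `f ↦ f(x T ^ a, T ^ b)`, with `x` the inner and `T` the outer variable of
`R[X][X]`. Its `T`-degree is the largest weight of a monomial of `f` when `X` and `Y` are given the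
weights `a` and `b`. -/
noncomputable def weightedSubst {R : Type*} [CommSemiring R] (a b : ℕ) :
    MvPolynomial (Fin 2) R →ₐ[R] R[X][X] :=
  aeval ![Polynomial.C Polynomial.X * Polynomial.X ^ a, Polynomial.X ^ b]

theorem weightedSubst_monomial {R : Type*} [CommSemiring R] (a b : ℕ) (n : Fin 2 →₀ ℕ) (c : R) :
    weightedSubst a b (monomial n c) =
      Polynomial.monomial (a * n 0 + b * n 1) (Polynomial.monomial (n 0) c) := by
  rw [weightedSubst, aeval_monomial, Finsupp.prod_fintype _ _ fun _ => pow_zero _,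
    Fin.prod_univ_two, ← Polynomial.C_mul_X_pow_eq_monomial, ← Polynomial.C_mul_X_pow_eq_monomial,
    Polynomial.algebraMap_apply, Polynomial.algebraMap_eq]
  simp only [Matrix.cons_val, Polynomial.C_mul, Polynomial.C_pow]
  ring

theorem coeff_coeff_weightedSubst {R : Type*} [CommSemiring R] (f : MvPolynomial (Fin 2) R)
    (a : ℕ) {b : ℕ} (hb : b ≠ 0) (m : Fin 2 →₀ ℕ) :
    ((weightedSubst a b f).coeff (a * m 0 + b * m 1)).coeff (m 0) = f.coeff m := by
  induction f using MvPolynomial.induction_on' with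
  | monomial n c =>
    rw [weightedSubst_monomial, Polynomial.coeff_monomial, coeff_monomial]
    by_cases hnm : n = m
    · simp [hnm]
    rw [if_neg hnm]
    split_ifs with hw
    · rw [Polynomial.coeff_monomial, if_neg]
      intro h0
      refine hnm (Finsupp.ext fun i => ?_)
      rw [h0, Nat.add_left_cancel_iff, Nat.mul_left_cancel_iff (Nat.pos_of_ne_zero hb)] at hw
      fin_cases i
      exacts [h0, hw]
    · rw [Polynomial.coeff_zero]
  | add f g hf hg =>
    rw [map_add, Polynomial.coeff_add, Polynomial.coeff_add, hf, hg, coeff_add]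

theorem le_natDegree_weightedSubst {R : Type*} [CommSemiring R] {f : MvPolynomial (Fin 2) R}
    (a : ℕ) {b : ℕ} (hb : b ≠ 0) {m : Fin 2 →₀ ℕ} (hm : m ∈ f.support) :
    a * m 0 + b * m 1 ≤ (weightedSubst a b f).natDegree := by
  refine Polynomial.le_natDegree_of_ne_zero fun h => mem_support_iff.mp hm ?_
  rw [← coeff_coeff_weightedSubst f a hb m, h, Polynomial.coeff_zero]

theorem map_weightedSubst {R A : Type*} [CommSemiring R] [CommSemiring A] [Algebra R A]
    (φ : R[X] →+* A) (hφ : ∀ c, φ (Polynomial.C c) = algebraMap R A c)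
    (f : MvPolynomial (Fin 2) R) (a b : ℕ) :
    (weightedSubst a b f).map φ =
      aeval ![Polynomial.C (φ Polynomial.X) * Polynomial.X ^ a, (Polynomial.X : A[X]) ^ b] f := by
  induction f using MvPolynomial.induction_on with
  | C c =>
    rw [← algebraMap_eq, AlgHom.commutes, AlgHom.commutes, Polynomial.algebraMap_apply,
      Polynomial.map_C, Polynomial.algebraMap_eq, hφ, Polynomial.algebraMap_apply]
  | add f g hf hg => rw [map_add, map_add, Polynomial.map_add, hf, hg]
  | mul_X f i hf =>
    rw [map_mul, map_mul, Polynomial.map_mul, hf]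
    fin_cases i <;> simp [weightedSubst]

theorem aeval_Fpoly {K A : Type*} [Field K] [CommRing A] [Algebra K A] (f : MvPolynomial (Fin 2) K)
    (d : ℕ) (x₁ x₂ x₃ x₄ : A) :
    aeval ![1, x₁, x₂, x₃, x₄] (Fpoly f d) =
      (x₂ - x₄) ^ 2 + (x₁ - x₃) * (aeval ![x₁, x₂] f - aeval ![x₃, x₄] f) := by
  simp only [Fpoly, map_add, map_mul, map_sub, map_pow, map_sum, aeval_X, aeval_C, one_pow,
    mul_one, aeval_def ![x₁, x₂], aeval_def ![x₃, x₄], eval₂_eq', Fin.prod_univ_two,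
    Matrix.cons_val, ← Finset.sum_sub_distrib, mul_sub]

theorem add_le_totalDegree_of_mem_support {R : Type*} [CommSemiring R] {f : MvPolynomial (Fin 2) R}
    {m : Fin 2 →₀ ℕ} (hm : m ∈ f.support) : m 0 + m 1 ≤ f.totalDegree := by
  simpa [Finsupp.sum_fintype] using le_totalDegree hm

theorem natDegree_leadingCoeff_X_pow_add_C_X_mul {R : Type*} [CommRing R] [IsDomain R] {N k : ℕ}
    {P : R[X][X]} {Q : R[X][X][X]} (hP : N < P.natDegree) (hQ : Q.natDegree ≤ N) :
    (Polynomial.X ^ (N + k) + Polynomial.C Polynomial.X * Polynomial.X ^ k *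
      (P.map Polynomial.C - Q)).leadingCoeff.natDegree = 1 := by
  have hPC : (P.map Polynomial.C).natDegree = P.natDegree :=
    Polynomial.natDegree_map_eq_of_injective Polynomial.C_injective P
  have hQP : Q.natDegree < (P.map Polynomial.C).natDegree := by omega
  have hdiff : (P.map Polynomial.C - Q).natDegree = P.natDegree := by
    rw [Polynomial.natDegree_sub_eq_left_of_natDegree_lt hQP, hPC]
  have hlead : (P.map Polynomial.C - Q).leadingCoeff = Polynomial.C P.leadingCoeff := by
    rw [Polynomial.leadingCoeff_sub_of_degree_lt (Polynomial.degree_lt_degree hQP),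
      Polynomial.leadingCoeff_map_of_injective Polynomial.C_injective]
  have hP0 : P.leadingCoeff ≠ 0 := by
    rw [Polynomial.leadingCoeff_ne_zero]
    exact Polynomial.ne_zero_of_natDegree_gt hP
  have hdiff0 : P.map Polynomial.C - Q ≠ 0 := by
    rw [← Polynomial.leadingCoeff_ne_zero, hlead, Polynomial.C_ne_zero]
    exact hP0
  rw [Polynomial.leadingCoeff_add_of_degree_lt (Polynomial.degree_lt_degree _),
    Polynomial.leadingCoeff_mul, Polynomial.leadingCoeff_mul, Polynomial.leadingCoeff_C,
    Polynomial.leadingCoeff_X_pow, mul_one, hlead, Polynomial.natDegree_mul_C hP0,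
    Polynomial.natDegree_X]
  rw [Polynomial.natDegree_X_pow, Polynomial.natDegree_mul (by simp) hdiff0, hdiff,
    Polynomial.natDegree_C_mul_X_pow _ _ Polynomial.X_ne_zero]
  omega

theorem IsConjugatePaired.weight_le {K L : Type*} [Field K] [Field L] [Algebra K L]
    {f : MvPolynomial (Fin 2) K} {d : ℕ}
    (hF : IsConjugatePaired K (map (algebraMap K L) (Fpoly f d))) (hdeg : f.totalDegree ≤ d)
    {m : Fin 2 →₀ ℕ} (hm : m ∈ f.support) : 2 * m 0 + (d + 1) * m 1 ≤ 2 * d := by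
  by_contra! hlt
  -- With these weights `f(X₁, X₂)` outweighs `f(X₁ - u T ^ 2, 0)`, and its product with
  -- `X₁ - X₃ = u T ^ 2` outweighs `X₂ ^ 2`: the leading coefficient in `T` is linear in `u`.
  let x : K[X][X][X] := Polynomial.C (Polynomial.C Polynomial.X)
  let u : K[X][X][X] := Polynomial.C Polynomial.X
  let T : K[X][X][X] := Polynomial.X
  let P : K[X][X] := weightedSubst 2 (d + 1) f
  let Q : K[X][X][X] := aeval ![(x - u) * T ^ 2, 0] f
  have hv : aeval ![1, x * T ^ 2, T ^ (d + 1), (x - u) * T ^ 2, 0] (Fpoly f d) =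
      T ^ (2 * d + 2) + u * T ^ 2 * (P.map Polynomial.C - Q) := by
    rw [map_weightedSubst _ fun _ => rfl, aeval_Fpoly (A := K[X][X][X])]
    ring
  have hP : 2 * d < P.natDegree := hlt.trans_le (le_natDegree_weightedSubst 2 d.succ_ne_zero hm)
  have hQ : Q.natDegree ≤ 2 * d := by
    refine natDegree_aeval_le fun n hn => ?_
    have hn0 := add_le_totalDegree_of_mem_support hn
    have hxu : ((x - u) * T ^ 2).natDegree ≤ 2 := by
      simpa only [x, u, T, ← Polynomial.C_sub] using Polynomial.natDegree_C_mul_X_pow_le _ _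
    calc ∑ i, n i * (![(x - u) * T ^ 2, 0] i).natDegree
        = n 0 * ((x - u) * T ^ 2).natDegree := by simp
      _ ≤ n 0 * 2 := by gcongr
      _ ≤ 2 * d := by omega
  exact hF.natDegree_leadingCoeff_aeval_ne_one _
    (hv ▸ natDegree_leadingCoeff_X_pow_add_C_X_mul hP hQ)

theorem IsConjugatePaired.eq_zero_of_eq_one {K L : Type*} [Field K] [Field L] [Algebra K L]
    {f : MvPolynomial (Fin 2) K} {d : ℕ}
    (hF : IsConjugatePaired K (map (algebraMap K L) (Fpoly f d)))
    (hlin : ∀ m ∈ f.support, m 1 ≤ 1) {m : Fin 2 →₀ ℕ} (hm : m ∈ f.support) (hm1 : m 1 = 1) :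
    m 0 = 0 := by
  let y : K[X][X][X] := Polynomial.X
  let z : K[X][X][X] := Polynomial.C Polynomial.X
  let w : K[X][X][X] := Polynomial.C (Polynomial.C Polynomial.X)
  let P : K[X][X] := weightedSubst 0 1 f
  have hv : aeval ![1, z, y, w, y] (Fpoly f d) = Polynomial.C (diffPoly Polynomial.X) *
      (P.map (Polynomial.mapRingHom Polynomial.C) - P.map Polynomial.C) := by
    rw [map_weightedSubst _ fun _ => Polynomial.map_C _, map_weightedSubst _ fun _ => rfl,
      aeval_Fpoly (A := K[X][X][X])]
    simp [diffPoly, z, y, w]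
  by_contra hm0
  have hdiff0 : diffPoly (Polynomial.X : K[X]) ≠ 0 := prime_diffPoly_X.ne_zero
  have hP : P.natDegree ≤ 1 := natDegree_aeval_le fun n hn => by simpa using hlin n hn
  have hcoeff : (P.map (Polynomial.mapRingHom Polynomial.C) - P.map Polynomial.C).coeff 1 =
      diffPoly (P.coeff 1) := by
    rw [Polynomial.coeff_sub, Polynomial.coeff_map, Polynomial.coeff_map, diffPoly,
      Polynomial.coe_mapRingHom]
  have hcoeff0 : diffPoly (P.coeff 1) ≠ 0 := by
    refine Polynomial.ne_zero_of_natDegree_gt (n := 0) ?_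
    rw [natDegree_diffPoly]
    refine (Nat.pos_of_ne_zero hm0).trans_le (Polynomial.le_natDegree_of_ne_zero ?_)
    have h := coeff_coeff_weightedSubst f 0 one_ne_zero m
    rw [zero_mul, zero_add, one_mul, hm1] at h
    exact h ▸ mem_support_iff.mp hm
  refine hF.natDegree_aeval_ne_one ![1, z, y, w, y] ?_
  rw [hv, Polynomial.natDegree_C_mul hdiff0]
  exact Polynomial.natDegree_eq_of_le_of_coeff_ne_zero
    (Polynomial.natDegree_sub_le_of_le (Polynomial.natDegree_map_le.trans hP)
      (Polynomial.natDegree_map_le.trans hP)) (hcoeff ▸ hcoeff0)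

theorem exists_toMvPolynomial_eq {ι R : Type*} [CommSemiring R] {f : MvPolynomial ι R} {i : ι}
    (hf : f.vars ⊆ {i}) : ∃ g : R[X], g.toMvPolynomial i = f := by
  obtain ⟨g, rfl⟩ := exists_rename_eq_of_vars_subset_range f (fun _ : Unit => i)
    (Function.injective_of_subsingleton _)
    (fun j hj => ⟨(), (Finset.mem_singleton.mp (hf hj)).symm⟩)
  exact ⟨uniqueAlgEquiv R Unit g, by
    rw [Polynomial.toMvPolynomial_eq_rename_comp, AlgHom.comp_apply, AlgEquiv.coe_toAlgHom,
      AlgEquiv.symm_apply_apply]⟩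

theorem exists_sq_add_eq_zero_of_dvd_X_sq_add_C {R : Type*} [CommRing R] [IsDomain R] {c : R}
    {g : R[X]} (hg : g ∣ Polynomial.X ^ 2 + Polynomial.C c) (hdeg : g.natDegree = 1) :
    ∃ r, r ^ 2 + c = 0 := by
  have hunit : IsUnit (g.coeff 1) := by
    rw [← hdeg]
    exact isUnit_of_dvd_unit (Polynomial.leadingCoeff_dvd_leadingCoeff hg)
      ((Polynomial.monic_X_pow_add_C c two_ne_zero).leadingCoeff ▸ isUnit_one)
  obtain ⟨a, ha⟩ := hunit.exists_left_inv
  have hroot : g.IsRoot (-(a * g.coeff 0)) := by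
    have heval := congrArg (Polynomial.eval (-(a * g.coeff 0)))
      (Polynomial.eq_X_add_C_of_natDegree_le_one hdeg.le)
    simp only [Polynomial.eval_add, Polynomial.eval_mul, Polynomial.eval_C,
      Polynomial.eval_X] at heval
    rw [Polynomial.IsRoot, heval]
    linear_combination -g.coeff 0 * ha
  exact ⟨_, by simpa using hroot.dvd hg⟩

theorem map_diffPoly {R S : Type*} [CommRing R] [CommRing S] (φ : R →+* S) (f : R[X]) :
    (diffPoly f).map (Polynomial.mapRingHom φ) = diffPoly (f.map φ) := by
  simp [diffPoly, Polynomial.map_map, Polynomial.mapRingHom_comp_C]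

theorem IsConjugatePaired.isSquare_diffPoly {K L : Type*} [Field K] [Field L] [Algebra K L]
    [IsAlgClosed L] {f : K[X]} {d : ℕ}
    (hF : IsConjugatePaired K (map (algebraMap K L) (Fpoly (f.toMvPolynomial 0) d))) :
    IsSquare (diffPoly Polynomial.X * diffPoly (f.map (algebraMap K L))) := by
  let V : K[X][X][X] := Polynomial.X
  let y : K[X][X][X] := Polynomial.C Polynomial.X
  let x : K[X][X][X] := Polynomial.C (Polynomial.C Polynomial.X)
  have hv : aeval ![1, y, V, x, 0] (Fpoly (f.toMvPolynomial 0) d) =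
      Polynomial.X ^ 2 + Polynomial.C (diffPoly Polynomial.X * diffPoly f) := by
    rw [aeval_Fpoly (A := K[X][X][X]), aeval_toMvPolynomial, aeval_toMvPolynomial]
    have hy : Polynomial.aeval y f = Polynomial.C (f.map Polynomial.C) :=
      (Polynomial.aeval_algebraMap_apply K[X][X][X] (Polynomial.X : K[X][X]) f).trans
        (congrArg _ (Polynomial.aeval_X_left_eq_map f))
    have hx : Polynomial.aeval x f = Polynomial.C (Polynomial.C f) :=
      (Polynomial.aeval_algebraMap_apply K[X][X][X] (Polynomial.C Polynomial.X : K[X][X]) f).trans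
        (congrArg _ ((Polynomial.aeval_algebraMap_apply K[X][X] Polynomial.X f).trans
          (congrArg _ (Polynomial.aeval_X_left_apply f))))
    rw [Matrix.cons_val_zero, Matrix.cons_val_zero, hy, hx, diffPoly_X, diffPoly, Polynomial.C_mul,
      Polynomial.C_sub, Polynomial.C_sub]
    ring
  obtain ⟨P, hPF, hP⟩ := hF.exists_dvd_natDegree_eq_one
    (hv ▸ Polynomial.natDegree_X_pow_add_C)
  have hmap : mapCoeffs₃ (algebraMap K L)
      (Polynomial.X ^ 2 + Polynomial.C (diffPoly Polynomial.X * diffPoly f)) =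
      Polynomial.X ^ 2 +
        Polynomial.C (diffPoly Polynomial.X * diffPoly (f.map (algebraMap K L))) := by
    simp [map_diffPoly]
  rw [hv, hmap] at hPF
  obtain ⟨r, hr⟩ := exists_sq_add_eq_zero_of_dvd_X_sq_add_C hPF hP
  obtain ⟨i, hi⟩ := IsAlgClosed.exists_pow_nat_eq (-1 : L) two_pos
  refine ⟨Polynomial.C (Polynomial.C i) * r, ?_⟩
  have hi' : (Polynomial.C (Polynomial.C i)) ^ 2 = -1 := by
    rw [← Polynomial.C_pow, ← Polynomial.C_pow, hi, Polynomial.C_neg, Polynomial.C_neg,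
      Polynomial.C_1, Polynomial.C_1]
  linear_combination hr - r ^ 2 * hi'

theorem IsConjugatePaired.exists_eq_toMvPolynomial {K L : Type*} [Field K] [Field L] [Algebra K L]
    {f : MvPolynomial (Fin 2) K} {d : ℕ}
    (hF : IsConjugatePaired K (map (algebraMap K L) (Fpoly f d))) (hdeg : f.totalDegree ≤ d)
    (h01 : coeffXY f 0 1 = 0) : ∃ g : K[X], g.toMvPolynomial 0 = f := by
  have hlin : ∀ m ∈ f.support, m 1 ≤ 1 := by
    intro m hm
    by_contra! hlt
    have hweight := hF.weight_le hdeg hm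
    nlinarith
  refine exists_toMvPolynomial_eq fun i hi => ?_
  obtain ⟨m, hm, hmi⟩ := (mem_vars_iff_mem_support i).mp hi
  by_contra hi0
  obtain rfl : i = 1 := Fin.eq_one_of_ne_zero i (by simpa using hi0)
  have hm1 : m 1 = 1 := le_antisymm (hlin m hm) (Nat.one_le_iff_ne_zero.mpr (by simpa using hmi))
  have hm0 : m 0 = 0 := hF.eq_zero_of_eq_one hlin hm hm1
  refine mem_support_iff.mp hm (Eq.trans (congrArg (coeff · f) ?_) h01)
  ext j
  fin_cases j <;> simp [hm0, hm1]

theorem IsConjugatePaired.exists_eq_monomial {K L : Type*} [Field K] [Field L] [Algebra K L]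
    [IsAlgClosed L] (p : ℕ) [ExpChar K p] (hp : p ≠ 2) {f : MvPolynomial (Fin 2) K} {d : ℕ}
    (hF : IsConjugatePaired K (map (algebraMap K L) (Fpoly f d))) (hdeg : f.totalDegree ≤ d)
    (h00 : coeffXY f 0 0 = 0) (h01 : coeffXY f 0 1 = 0) :
    ∃ l a, f = monomial (Finsupp.single 0 (p ^ l)) a := by
  have := expChar_of_injective_algebraMap (algebraMap K L).injective p
  have : PerfectRing L p := PerfectField.toPerfectRing p
  obtain ⟨g, rfl⟩ := hF.exists_eq_toMvPolynomial hdeg h01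
  obtain ⟨l, a, b, hab⟩ := exists_eq_C_mul_X_pow_add_C_of_isSquare_diffPoly p hp
    hF.isSquare_diffPoly
  have hg0 : g.coeff 0 = 0 := by
    rw [Polynomial.coeff_zero_eq_eval_zero, ← eval_toMvPolynomial (fun _ => 0) (0 : Fin 2)]
    simpa [coeffXY, constantCoeff_eq] using h00
  have hg : g = Polynomial.monomial (p ^ l) (g.coeff (p ^ l)) := by
    ext n
    rw [Polynomial.coeff_monomial]
    split_ifs with hn
    · rw [hn]
    rcases eq_or_ne n 0 with rfl | hn0
    · exact hg0
    have hcoeff := congrArg (Polynomial.coeff · n) hab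
    simpa [Polynomial.coeff_X_pow, Polynomial.coeff_C, hn0, Ne.symm hn] using hcoeff
  refine ⟨l, g.coeff (p ^ l), ?_⟩
  conv_lhs => rw [hg]
  rw [Polynomial.toMvPolynomial, Polynomial.aeval_monomial, algebraMap_eq, C_mul_X_pow_eq_monomial]

end Specialization

theorem totalDegree_pos_of_irreducible_map {K L ι : Type*} [Field K] [Field L] [Algebra K L]
    {g : MvPolynomial ι K} (hg : Irreducible (map (algebraMap K L) g)) : 0 < g.totalDegree := by
  rw [Nat.pos_iff_ne_zero]
  intro hdeg
  rw [totalDegree_eq_zero_iff_eq_C.mp hdeg, map_C] at hg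
  rcases eq_or_ne (algebraMap K L (coeff 0 g)) 0 with h | h
  · exact hg.ne_zero (by rw [h, C_0])
  · exact hg.not_isUnit (h.isUnit.map C)

theorem statement4_general (p : ℕ) (hodd : p ≠ 2) (K : Type*) [Field K] [ExpChar K p]
    (f : MvPolynomial (Fin 2) K) (d : ℕ) (hdeg : f.totalDegree = d) (hd : 1 ≤ d)
    (h00 : coeffXY f 0 0 = 0) (h01 : coeffXY f 0 1 = 0)
    (hex : (¬ ∃ j : ℕ, d = p ^ j) ∨ ∃ i j : ℕ, (i, j) ≠ (d, 0) ∧ coeffXY f i j ≠ 0) :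
    HasAbsIrrComponent (Fpoly f d) := by
  by_contra hirr
  have hF : IsConjugatePaired K (map (algebraMap K (AlgebraicClosure K)) (Fpoly f d)) :=
    isConjugatePaired_map fun g hgF hg => hirr ⟨g, hgF, totalDegree_pos_of_irreducible_map hg, hg⟩
  obtain ⟨l, a, rfl⟩ := hF.exists_eq_monomial p hodd hdeg.le h00 h01
  have ha : a ≠ 0 := by
    rintro rfl
    rw [monomial_zero, totalDegree_zero] at hdeg
    omega
  rw [totalDegree_monomial _ ha, Finsupp.sum_single_index rfl] at hdeg
  rcases hex with hd' | ⟨i, j, hij, hcoeff⟩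
  · exact hd' ⟨l, hdeg.symm⟩
  · rw [coeffXY, coeff_monomial, ite_ne_right_iff] at hcoeff
    have hi : d = i := by simpa [hdeg] using DFunLike.congr_fun hcoeff.1 0
    have hj : 0 = j := by simpa using DFunLike.congr_fun hcoeff.1 1
    exact hij (by rw [hi, hj])

/-- Odd characteristic, with `a_{0,1} = 0`: if `d` is not a power of `p`, or some coefficient
`a_{i,j}` with `(i,j) ≠ (d,0)` is nonzero, then `S_f` contains an absolutely irreducible
component defined over `F_q`. -/
theorem statement4 (p h q : ℕ) (hp : p.Prime) (hodd : p ≠ 2) (hh : 0 < h) (hq : q = p ^ h)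
    (K : Type*) [Field K] [Fintype K] (hcard : Fintype.card K = q)
    (f : MvPolynomial (Fin 2) K) (d : ℕ) (hdeg : f.totalDegree = d) (hd : 1 ≤ d)
    (h00 : coeffXY f 0 0 = 0) (h01 : coeffXY f 0 1 = 0)
    (hex : (¬ ∃ j : ℕ, d = p ^ j) ∨ ∃ i j : ℕ, (i, j) ≠ (d, 0) ∧ coeffXY f i j ≠ 0) :
    HasAbsIrrComponent (Fpoly f d) := by
  have : Fact p.Prime := ⟨hp⟩
  have : CharP K p := charP_of_card_eq_prime_pow (hcard.trans hq)
  exact statement4_general p hodd K f d hdeg hd h00 h01 hex
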